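/- For each p ∈ {3,5,7} there is a full congruence of Fourier coefficients modulo p between Δ and a weight-two Eisenstein series E_p: for all n ≥ 0, τ(n) ≡ c_{2,ω_3^2,𝟙,n} (mod 3), τ(n) ≡ c_{2,ω_5^2,𝟙,n} (mod 5), and τ(n) ≡ c_{2,ω_7^4,𝟙,n} (mod 7). -/

import Mathlib

noncomputable section

/-- The Ramanujan tau function `τ(n)`: the `n`-th coefficient of the `q`-expansion
`q ∏_{m ≥ 1} (1 - q^m)²⁴` of `Δ` (the product may be truncated at `m = n` without changing
the `n`-th coefficient). -/
def ramanujanTau (n : ℕ) : ℤ :=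
  (Polynomial.X * ∏ m ∈ Finset.Icc 1 n, (1 - Polynomial.X ^ m) ^ 24 : Polynomial ℤ).coeff n

/-- The `n`-th Fourier coefficient `c_{k,a,b,n} = ∑_{d ∣ n} ω_p^a(n/d) ω_p^b(d) d^{k-1}` of the
Eisenstein series `E_{k, ω_p^a, ω_p^b}`, where `ω : ℤ → ℤ_[p]` is the Teichmüller character
mod `p`.  (For `n = 0` the sum is empty, giving constant term `0`, as is the case whenever
the first character is nontrivial.) -/
def eisCoeff (p : ℕ) [Fact p.Prime] (ω : ℤ → ℤ_[p]) (k a b : ℕ) (n : ℕ) : ℤ_[p] :=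
  ∑ d ∈ n.divisors, ω ((n / d : ℕ) : ℤ) ^ a * ω (d : ℤ) ^ b * (d : ℤ_[p]) ^ (k - 1)

end

instance : Fact (Nat.Prime 3) := ⟨by norm_num⟩
instance : Fact (Nat.Prime 5) := ⟨by norm_num⟩
instance : Fact (Nat.Prime 7) := ⟨by norm_num⟩

/-!
The Rankin–Cohen bracket `4 E₄ θE₆ - 6 E₆ θE₄`, with `θ = q d/dq`, is a modular form of weight `12`
whose `q`-expansion starts with `-3456 q`, so it is `-3456 Δ`; likewise `E₈ = E₄²`. With
`A = ∑ σ₃(n) qⁿ`, `B = ∑ σ₅(n) qⁿ` and `C = ∑ σ₇(n) qⁿ` these identities become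
`7 (1 + 240 A) θB + 5 (1 - 504 B) θA = 12 ∑ τ(n) qⁿ` and `C = A + 120 A²`, which hold over `ℤ`.
The first one gives `τ(n) ≡ n σ₃(n)` modulo `7` and `τ(n) ≡ n σ₅(n) ≡ n σ₁(n)` modulo `5`. The two
together give `3 τ(n) ≡ n (7 σ₅(n) + 4 σ₃(n) + σ₇(n)) ≡ 3 n σ₁(n)` modulo `9`, hence
`τ(n) ≡ n σ₁(n)` modulo `3`. Finally `(n / d)^(j + 1) d = n (n / d)^j`, and `ω m ≡ m`, so the
coefficient of the Eisenstein series with first character `ω^(j + 1)` reduces to `n σ_j(n)`.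
-/

section Discriminant

open Filter Topology UpperHalfPlane ModularForm

theorem tendstoLocallyUniformlyOn_const {X β ι : Type*} [TopologicalSpace X] [UniformSpace β]
    (f : X → β) (l : Filter ι) (U : Set X) : TendstoLocallyUniformlyOn (fun _ ↦ f) f l U :=
  fun _ hu _ _ ↦ ⟨U, self_mem_nhdsWithin, .of_forall fun _ _ _ ↦ refl_mem_uniformity hu⟩

theorem tendstoLocallyUniformlyOn_pow {X M ι : Type*} [TopologicalSpace X] [NormedRing M]
    {l : Filter ι} {F : ι → X → M} {f : X → M} {U : Set X}
    (hF : TendstoLocallyUniformlyOn F f l U) (hf : ContinuousOn f U) (k : ℕ) :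
    TendstoLocallyUniformlyOn (fun i ↦ F i ^ k) (f ^ k) l U := by
  induction k with
  | zero => simpa only [pow_zero] using tendstoLocallyUniformlyOn_const 1 l U
  | succ k ih =>
    simp only [pow_succ]
    exact ih.mul₀ hF (hf.pow k) hf

theorem tendstoLocallyUniformlyOn_iteratedDeriv {ι : Type*} {l : Filter ι} {F : ι → ℂ → ℂ}
    {f : ℂ → ℂ} {U : Set ℂ} (hU : IsOpen U) (hF : ∀ i, DifferentiableOn ℂ (F i) U)
    (hf : TendstoLocallyUniformlyOn F f l U) (n : ℕ) :
    TendstoLocallyUniformlyOn (fun i ↦ iteratedDeriv n (F i)) (iteratedDeriv n f) l U := by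
  induction n generalizing F f with
  | zero => simpa only [iteratedDeriv_zero] using hf
  | succ n ih =>
    simp only [iteratedDeriv_succ']
    exact ih (fun i ↦ (hF i).deriv hU) (hf.deriv (.of_forall hF) hU)

theorem iteratedDeriv_polynomial_eval {𝕜 : Type*} [NontriviallyNormedField 𝕜] (P : Polynomial 𝕜)
    (n : ℕ) :
    iteratedDeriv n (fun x ↦ P.eval x) = fun x ↦ (Polynomial.derivative^[n] P).eval x := by
  induction n generalizing P with
  | zero => simp
  | succ n ih =>
    have hderiv : deriv (fun x ↦ P.eval x) = fun x ↦ P.derivative.eval x := by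
      ext x
      exact P.deriv
    rw [iteratedDeriv_succ', hderiv, ih, Function.iterate_succ_apply]

theorem iteratedDeriv_polynomial_eval_zero {𝕜 : Type*} [NontriviallyNormedField 𝕜]
    (P : Polynomial 𝕜) (n : ℕ) :
    iteratedDeriv n (fun x ↦ P.eval x) 0 = n.factorial * P.coeff n := by
  simp only [iteratedDeriv_polynomial_eval, ← Polynomial.coeff_zero_eq_eval_zero,
    Polynomial.coeff_iterate_derivative, zero_add, Nat.descFactorial_self, nsmul_eq_mul]

theorem iteratedDeriv_zero_eq_of_tendstoLocallyUniformlyOn_eval {ι : Type*} {l : Filter ι}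
    [l.NeBot] {P : ι → Polynomial ℂ} {f : ℂ → ℂ} {U : Set ℂ} (hU : IsOpen U) (hU0 : 0 ∈ U)
    (hf : TendstoLocallyUniformlyOn (fun i x ↦ (P i).eval x) f l U) {n : ℕ} {a : ℂ}
    (ha : ∀ᶠ i in l, (P i).coeff n = a) :
    iteratedDeriv n f 0 = n.factorial * a := by
  have hlim := (tendstoLocallyUniformlyOn_iteratedDeriv hU
    (fun i ↦ (P i).differentiable.differentiableOn) hf n).tendsto_at hU0
  refine tendsto_nhds_unique (hlim.congr' ?_) tendsto_const_nhds
  filter_upwards [ha] with i hi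
  rw [iteratedDeriv_polynomial_eval_zero, hi]

theorem dvd_prod_sub_prod_of_subset {ι R : Type*} [CommRing R] [DecidableEq ι] {a : R} {f : ι → R}
    {s t : Finset ι} (hst : s ⊆ t) (hf : ∀ i ∈ t \ s, a ∣ f i - 1) :
    a ∣ ∏ i ∈ t, f i - ∏ i ∈ s, f i := by
  rw [← Finset.prod_sdiff hst, ← sub_one_mul]
  refine Dvd.dvd.mul_right ?_ _
  simp only [← Ideal.mem_span_singleton, ← Ideal.Quotient.mk_eq_mk_iff_sub_mem, map_one,
    map_prod] at hf ⊢
  exact Finset.prod_eq_one hf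

theorem coeff_eq_of_X_pow_dvd_sub {R : Type*} [Ring R] {P Q : Polynomial R} {m n : ℕ}
    (h : Polynomial.X ^ m ∣ P - Q) (hn : n < m) : P.coeff n = Q.coeff n := by
  simpa [sub_eq_zero] using Polynomial.X_pow_dvd_iff.mp h n hn

/-- The truncation `q ∏_{i ∈ s} (1 - q^(i+1))²⁴` of the product defining `Δ`. -/
noncomputable def discriminantTrunc (R : Type*) [CommRing R] (s : Finset ℕ) : Polynomial R :=
  Polynomial.X * ∏ i ∈ s, (1 - Polynomial.X ^ (i + 1)) ^ 24

theorem map_discriminantTrunc {R S : Type*} [CommRing R] [CommRing S] (φ : R →+* S)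
    (s : Finset ℕ) : (discriminantTrunc R s).map φ = discriminantTrunc S s := by
  simp [discriminantTrunc, Polynomial.map_prod]

theorem ramanujanTau_eq_coeff_discriminantTrunc_range (n : ℕ) :
    ramanujanTau n = (discriminantTrunc ℤ (Finset.range n)).coeff n := by
  rw [ramanujanTau, discriminantTrunc, Finset.range_eq_Ico,
    Finset.prod_Ico_add' (fun m ↦ (1 - Polynomial.X ^ m : Polynomial ℤ) ^ 24), zero_add]
  rfl

theorem coeff_discriminantTrunc {n : ℕ} {s : Finset ℕ} (hs : Finset.range n ⊆ s) :
    (discriminantTrunc ℤ s).coeff n = ramanujanTau n := by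
  rw [ramanujanTau_eq_coeff_discriminantTrunc_range]
  refine coeff_eq_of_X_pow_dvd_sub (m := n + 1) ?_ n.lt_succ_self
  rw [discriminantTrunc, discriminantTrunc, ← mul_sub]
  refine Dvd.dvd.mul_left (dvd_prod_sub_prod_of_subset hs fun i hi ↦ ?_) _
  have hni : n ≤ i := by simpa using (Finset.mem_sdiff.mp hi).2
  have hdvd := sub_dvd_pow_sub_pow (1 - Polynomial.X ^ (i + 1) : Polynomial ℤ) 1 24
  rw [one_pow, sub_sub_cancel_left, neg_dvd] at hdvd
  exact (pow_dvd_pow _ (by lia)).trans hdvd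

theorem tendstoLocallyUniformlyOn_eval_discriminantTrunc :
    TendstoLocallyUniformlyOn (fun (s : Finset ℕ) (q : ℂ) ↦ (discriminantTrunc ℂ s).eval q)
      (fun q ↦ q * (∏' i, (1 - q ^ (i + 1))) ^ 24) atTop (Metric.ball 0 1) := by
  have hP : TendstoLocallyUniformlyOn (fun (s : Finset ℕ) (q : ℂ) ↦ ∏ i ∈ s, (1 - q ^ (i + 1)))
      (fun q ↦ ∏' i, (1 - q ^ (i + 1))) atTop (Metric.ball 0 1) :=
    multipliableLocallyUniformlyOn_one_sub_pow.hasProdLocallyUniformlyOn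
  have hc : ContinuousOn (fun q : ℂ ↦ ∏' i, (1 - q ^ (i + 1))) (Metric.ball 0 1) :=
    differentiableOn_tprod_one_sub_pow.continuousOn
  refine ((tendstoLocallyUniformlyOn_const id atTop _).mul₀
    (tendstoLocallyUniformlyOn_pow hP hc 24) continuousOn_id (hc.pow 24)).congr fun s q _ ↦ ?_
  simp [discriminantTrunc, Polynomial.eval_prod, Finset.prod_pow]

theorem qExpansion_discriminant_coeff (n : ℕ) :
    (qExpansion 1 discriminant).coeff n = (ramanujanTau n : ℂ) := by
  have hcusp : cuspFunction 1 discriminant =ᶠ[𝓝 0]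
      fun q ↦ q * (∏' i, (1 - q ^ (i + 1))) ^ 24 := by
    filter_upwards [Metric.ball_mem_nhds 0 one_pos] with q hq
    rw [discriminant_cuspFunction_eqOn hq]
    dsimp only
    rw [(multipliable_one_sub_pow (by simpa using hq)).tprod_pow 24]
  have hcoeff : ∀ᶠ s in atTop, (discriminantTrunc ℂ s).coeff n = (ramanujanTau n : ℂ) := by
    filter_upwards [eventually_ge_atTop (Finset.range n)] with s hs
    rw [← map_discriminantTrunc (Int.castRingHom ℂ), Polynomial.coeff_map,
      coeff_discriminantTrunc hs, eq_intCast]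
  rw [qExpansion_coeff, hcusp.iteratedDeriv_eq n,
    iteratedDeriv_zero_eq_of_tendstoLocallyUniformlyOn_eval Metric.isOpen_ball
      (Metric.mem_ball_self one_pos) tendstoLocallyUniformlyOn_eval_discriminantTrunc hcoeff]
  exact inv_mul_cancel_left₀ (by exact_mod_cast n.factorial_ne_zero) _

end Discriminant

section Theta

open PowerSeries

/-- The operator `θ = q d/dq` on power series in `q`. -/
noncomputable def theta (R : Type*) [CommRing R] : Derivation R R⟦X⟧ R⟦X⟧ :=
  (X : R⟦X⟧) • derivative R

variable {R S : Type*} [CommRing R] [CommRing S]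

@[simp]
theorem coeff_ofNat_mul (m : ℕ) [m.AtLeastTwo] (f : R⟦X⟧) (n : ℕ) :
    (ofNat(m) * f).coeff n = ofNat(m) * f.coeff n := by
  rw [← map_ofNat C, coeff_C_mul]

@[simp]
theorem coeff_theta (f : R⟦X⟧) (n : ℕ) : (theta R f).coeff n = n * f.coeff n := by
  cases n <;> simp [theta, coeff_succ_X_mul, coeff_derivative, mul_comm]

theorem map_theta (φ : R →+* S) (f : R⟦X⟧) : (theta R f).map φ = theta S (f.map φ) := by
  ext n
  simp

theorem theta_ofNat_mul (m : ℕ) [m.AtLeastTwo] (f : R⟦X⟧) :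
    theta R (ofNat(m) * f) = ofNat(m) * theta R f := by
  ext n
  simp only [coeff_theta, coeff_ofNat_mul, mul_left_comm]

end Theta

section QExpansion

open UpperHalfPlane Function Derivative Manifold

local notation "𝕢" => Periodic.qParam

variable {h : ℝ} {f : ℍ → ℂ}

theorem deriv_qParam (h : ℝ) (z : ℂ) : deriv (𝕢 h) z = 2 * Real.pi * Complex.I / h * 𝕢 h z := by
  rw [← ModularForm.logDeriv_qParam, logDeriv_apply, div_mul_cancel₀ _ (Periodic.qParam_ne_zero z)]

theorem periodic_normalizedDerivOfComplex (hper : Periodic (f ∘ ofComplex) h) :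
    Periodic (D f ∘ ofComplex) h := by
  have hderiv (w : ℂ) : deriv (f ∘ ofComplex) (w + h) = deriv (f ∘ ofComplex) w := by
    rw [← deriv_comp_add_const, hper.funext]
  intro w
  rcases lt_or_ge 0 w.im with hw | hw
  · simp [normalizedDerivOfComplex, ofComplex_apply_of_im_pos, hw, hderiv]
  · simp [ofComplex_apply_of_im_nonpos, hw]

theorem normalizedDerivOfComplex_eq_deriv_cuspFunction (hh : 0 < h)
    (hper : Periodic (f ∘ ofComplex) h) (hhol : MDiff f) (hbdd : IsBoundedAtImInfty f) (τ : ℍ) :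
    D f τ = (h : ℂ)⁻¹ * (𝕢 h τ * deriv (cuspFunction h f) (𝕢 h τ)) := by
  have hq : 𝕢 h τ ∈ Metric.ball (0 : ℂ) 1 := by
    simpa using Periodic.norm_qParam_lt_one hh τ.im_pos
  have hdiff : DifferentiableAt ℂ (cuspFunction h f) (𝕢 h τ) :=
    (differentiableOn_cuspFunction_ball hh hper hhol hbdd).differentiableAt
      (Metric.isOpen_ball.mem_nhds hq)
  have hcomp : f ∘ ofComplex =ᶠ[nhds (τ : ℂ)] cuspFunction h f ∘ 𝕢 h := by
    filter_upwards [isOpen_upperHalfPlaneSet.mem_nhds τ.2] with z hz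
    simpa [ofComplex_apply_of_im_pos hz] using (eq_cuspFunction ⟨z, hz⟩ hh.ne' hper).symm
  rw [normalizedDerivOfComplex, hcomp.deriv_eq,
    deriv_comp _ hdiff Periodic.differentiable_qParam.differentiableAt, deriv_qParam]
  field

theorem hasSum_normalizedDerivOfComplex (hh : 0 < h)
    (hper : Periodic (f ∘ ofComplex) h) (hhol : MDiff f) (hbdd : IsBoundedAtImInfty f) (τ : ℍ) :
    HasSum (fun m ↦ (((h : ℂ)⁻¹ • theta ℂ (qExpansion h f)).coeff m) • 𝕢 h τ ^ m) (D f τ) := by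
  have hq : 𝕢 h τ ∈ Metric.ball (0 : ℂ) 1 := by
    simpa using Periodic.norm_qParam_lt_one hh τ.im_pos
  have hdiff := differentiableOn_cuspFunction_ball hh hper hhol hbdd
  have hterm (m : ℕ) : ((h : ℂ)⁻¹ • theta ℂ (qExpansion h f)).coeff (m + 1) • 𝕢 h τ ^ (m + 1) =
      (h : ℂ)⁻¹ * (𝕢 h τ * ((m.factorial : ℂ)⁻¹ • 𝕢 h τ ^ m •
        iteratedDeriv m (deriv (cuspFunction h f)) 0)) := by
    simp only [PowerSeries.coeff_smul, coeff_theta, qExpansion_coeff, iteratedDeriv_succ',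
      Nat.factorial_succ, smul_eq_mul]
    have := m.factorial_ne_zero
    push_cast
    field
  have hzero : ((h : ℂ)⁻¹ • theta ℂ (qExpansion h f)).coeff 0 = 0 := by
    rw [PowerSeries.coeff_smul, coeff_theta, Nat.cast_zero, zero_mul, smul_zero]
  rw [normalizedDerivOfComplex_eq_deriv_cuspFunction hh hper hhol hbdd, ← hasSum_nat_add_iff' 1]
  simp only [hterm, hzero, Finset.sum_range_one, zero_smul, sub_zero]
  simpa only [sub_zero] using ((Complex.hasSum_taylorSeries_on_ball (hdiff.deriv Metric.isOpen_ball)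
    hq).mul_left (𝕢 h τ)).mul_left (h : ℂ)⁻¹

theorem qExpansion_normalizedDerivOfComplex (hh : 0 < h)
    (hper : Periodic (f ∘ ofComplex) h) (hhol : MDiff f) (hbdd : IsBoundedAtImInfty f) :
    qExpansion h (D f) = (h : ℂ)⁻¹ • theta ℂ (qExpansion h f) := by
  have hsum := hasSum_normalizedDerivOfComplex hh hper hhol hbdd
  have hanalytic : AnalyticAt ℂ (cuspFunction h (D f)) 0 :=
    analyticAt_cuspFunction_zero hh (periodic_normalizedDerivOfComplex hper)
      (normalizedDerivOfComplex_mdifferentiable hhol)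
      (isBoundedAtImInfty_of_hasSum_qExpansion hh hsum)
  -- Mathlib states uniqueness of `q`-expansions for bundled functions only.
  let _ : FunLike (ℍ → ℂ) ℍ ℂ := ⟨id, injective_id⟩
  ext m
  exact (qExpansion_coeff_unique (D f) hh hanalytic hsum m).symm

end QExpansion

section RankinCohen

open UpperHalfPlane ModularForm EisensteinSeries Derivative Manifold MatrixGroups

variable {k l : ℤ}

theorem isBoundedAtImInfty_normalizedDerivOfComplex (f : ModularForm 𝒮ℒ k) :
    IsBoundedAtImInfty (D f) :=
  isBoundedAtImInfty_of_hasSum_qExpansion one_pos <| hasSum_normalizedDerivOfComplex one_pos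
    (SlashInvariantFormClass.periodic_comp_ofComplex f one_mem_strictPeriods_SL) f.holo'
    (ModularFormClass.bdd_at_infty f)

theorem analyticAt_cuspFunction_mul {h : ℝ} {F G : ℍ → ℂ} (hF : AnalyticAt ℂ (cuspFunction h F) 0)
    (hG : AnalyticAt ℂ (cuspFunction h G) 0) : AnalyticAt ℂ (cuspFunction h (F * G)) 0 := by
  rw [cuspFunction_mul hF.continuousAt hG.continuousAt]
  exact hF.mul hG

theorem analyticAt_cuspFunction_smul {h : ℝ} {F : ℍ → ℂ} (hF : AnalyticAt ℂ (cuspFunction h F) 0)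
    (c : ℂ) : AnalyticAt ℂ (cuspFunction h (c • F)) 0 := by
  rw [cuspFunction_smul hF.continuousAt]
  exact hF.const_smul

theorem qExpansion_normalizedDerivOfComplex_levelOne (f : ModularForm 𝒮ℒ k) :
    qExpansion 1 (D f) = theta ℂ (qExpansion 1 f) := by
  simpa using qExpansion_normalizedDerivOfComplex one_pos
    (SlashInvariantFormClass.periodic_comp_ofComplex f one_mem_strictPeriods_SL) f.holo'
    (ModularFormClass.bdd_at_infty f)

theorem analyticAt_cuspFunction_normalizedDerivOfComplex (f : ModularForm 𝒮ℒ k) :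
    AnalyticAt ℂ (cuspFunction 1 (D f)) 0 :=
  analyticAt_cuspFunction_zero one_pos
    (periodic_normalizedDerivOfComplex
      (SlashInvariantFormClass.periodic_comp_ofComplex f one_mem_strictPeriods_SL))
    (normalizedDerivOfComplex_mdifferentiable f.holo')
    (isBoundedAtImInfty_normalizedDerivOfComplex f)

theorem isBoundedAtImInfty_serreDerivative (f : ModularForm 𝒮ℒ k) :
    IsBoundedAtImInfty (serreDerivative k f) := by
  have hE2f := (isBoundedAtImInfty_E2.mul (ModularFormClass.bdd_at_infty f)).const_mul_left
    ((k : ℂ) * 12⁻¹)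
  have hsub := (isBoundedAtImInfty_normalizedDerivOfComplex f).sub hE2f
  have heq : serreDerivative k f = D f - fun z ↦ (k : ℂ) * 12⁻¹ * (E2 * (f : ℍ → ℂ)) z := by
    ext z
    simp [mul_assoc]
  exact heq ▸ hsub

theorem serreDerivative_slash (f : ModularForm 𝒮ℒ k) (γ : SL(2, ℤ)) :
    serreDerivative k f ∣[k + 2] γ = serreDerivative k f :=
  serreDerivative_slash_invariant f.holo' (f.slash_action_eq' _ ⟨γ, rfl⟩)

/-- The Serre derivative `D f - (k / 12) E₂ f` of a level one modular form of weight `k`, as a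
modular form of weight `k + 2`. -/
noncomputable def serreDerivativeForm (f : ModularForm 𝒮ℒ k) : ModularForm 𝒮ℒ (k + 2) where
  toFun := serreDerivative k f
  slash_action_eq' := by
    rintro _ ⟨γ, rfl⟩
    exact serreDerivative_slash f γ
  holo' := serreDerivative_mdifferentiable _ f.holo'
  bdd_at_cusps' {c} hc := by
    rw [Subgroup.IsArithmetic.isCusp_iff_isCusp_SL2Z] at hc
    rw [OnePoint.isBoundedAt_iff_forall_SL2Z hc]
    intro γ _
    exact (serreDerivative_slash f γ).symm ▸ isBoundedAtImInfty_serreDerivative f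

/-- The first Rankin–Cohen bracket `k f D g - l g D f` of level one modular forms of weights `k`
and `l`. It is written with Serre derivatives, which are modular; the multiples of `E₂` cancel. -/
noncomputable def rankinCohenBracket (f : ModularForm 𝒮ℒ k) (g : ModularForm 𝒮ℒ l) :
    ModularForm 𝒮ℒ (k + l + 2) :=
  (k : ℂ) • mcast (by ring) (f.mul (serreDerivativeForm g)) -
    (l : ℂ) • mcast (by ring) (g.mul (serreDerivativeForm f))

theorem coe_rankinCohenBracket (f : ModularForm 𝒮ℒ k) (g : ModularForm 𝒮ℒ l) :
    (rankinCohenBracket f g : ℍ → ℂ) = (k : ℂ) • ((f : ℍ → ℂ) * D g) - (l : ℂ) • (g * D f) := by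
  ext z
  have hf : serreDerivativeForm f z = serreDerivative k f z := rfl
  have hg : serreDerivativeForm g z = serreDerivative l g z := rfl
  simp only [rankinCohenBracket, FunLike.coe_sub, FunLike.coe_smul, coe_mcast, ModularForm.coe_mul,
    Pi.sub_apply, Pi.smul_apply, Pi.mul_apply, hf, hg, serreDerivative_apply, smul_eq_mul]
  ring

theorem qExpansion_rankinCohenBracket (f : ModularForm 𝒮ℒ k) (g : ModularForm 𝒮ℒ l) :
    qExpansion 1 (rankinCohenBracket f g) =
      (k : ℂ) • (qExpansion 1 f * theta ℂ (qExpansion 1 g)) -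
        (l : ℂ) • (qExpansion 1 g * theta ℂ (qExpansion 1 f)) := by
  have hf := ModularFormClass.analyticAt_cuspFunction_zero f one_pos one_mem_strictPeriods_SL
  have hg := ModularFormClass.analyticAt_cuspFunction_zero g one_pos one_mem_strictPeriods_SL
  have hDf := analyticAt_cuspFunction_normalizedDerivOfComplex f
  have hDg := analyticAt_cuspFunction_normalizedDerivOfComplex g
  have hfDg := analyticAt_cuspFunction_mul hf hDg
  have hgDf := analyticAt_cuspFunction_mul hg hDf
  rw [coe_rankinCohenBracket, UpperHalfPlane.qExpansion_sub (analyticAt_cuspFunction_smul hfDg k)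
    (analyticAt_cuspFunction_smul hgDf l), UpperHalfPlane.qExpansion_smul hfDg,
    UpperHalfPlane.qExpansion_smul hgDf, UpperHalfPlane.qExpansion_mul hf hDg,
    UpperHalfPlane.qExpansion_mul hg hDf, qExpansion_normalizedDerivOfComplex_levelOne f,
    qExpansion_normalizedDerivOfComplex_levelOne g]

theorem eq_of_forall_qExpansion_coeff_eq {f g : ModularForm 𝒮ℒ k}
    (h : ∀ i ≤ k.toNat / 12, (qExpansion 1 f).coeff i = (qExpansion 1 g).coeff i) : f = g := by
  rw [← sub_eq_zero]
  refine sturm_bound_levelOne (lt_of_lt_of_le ?_ (PowerSeries.nat_le_order _ (k.toNat / 12 + 1) ?_))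
  · exact_mod_cast Nat.lt_succ_self _
  · intro i hi
    rw [FunLike.coe_sub, ModularForm.qExpansion_sub one_pos one_mem_strictPeriods_SL, map_sub,
      h i (Nat.lt_succ_iff.mp hi), sub_self]

end RankinCohen

section IntegralIdentities

open UpperHalfPlane ModularForm EisensteinSeries MatrixGroups PowerSeries
open scoped ArithmeticFunction.sigma

theorem qExpansion_smul_discriminant (c : ℂ) :
    qExpansion 1 (c • CuspForm.discriminant : ModularForm 𝒮ℒ 12) = c • qExpansion 1 discriminant :=
  ModularForm.qExpansion_smul one_pos one_mem_strictPeriods_SL c CuspForm.discriminant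

theorem rankinCohenBracket_E₄_E₆ :
    rankinCohenBracket E₄ E₆ = (-3456 : ℂ) • (CuspForm.discriminant : ModularForm 𝒮ℒ 12) := by
  refine eq_of_forall_qExpansion_coeff_eq fun i (hi : i ≤ 1) ↦ ?_
  have hΔ₀ : (qExpansion 1 discriminant).coeff 0 = 0 :=
    CuspFormClass.qExpansion_coeff_zero CuspForm.discriminant one_pos one_mem_strictPeriods_SL
  rw [qExpansion_rankinCohenBracket, qExpansion_smul_discriminant]
  interval_cases i
  · simp [PowerSeries.coeff_mul, hΔ₀, -PowerSeries.coeff_zero_eq_constantCoeff]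
  · norm_num [PowerSeries.coeff_mul, Finset.Nat.antidiagonal_succ,
      discriminant_qExpansion_coeff_one, E₄_qExpansion_coeff_one, E₆_qExpansion_coeff_one,
      E_qExpansion_coeff_zero _ ⟨2, rfl⟩, E_qExpansion_coeff_zero _ ⟨3, rfl⟩,
      -PowerSeries.coeff_zero_eq_constantCoeff]

theorem E₈_eq_E₄_sq : E (show 3 ≤ 8 by norm_num) = mcast (by norm_num) (E₄.mul E₄) := by
  refine eq_of_forall_qExpansion_coeff_eq fun i (hi : i ≤ 0) ↦ ?_
  obtain rfl := Nat.le_zero.mp hi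
  rw [coe_mcast, ModularForm.qExpansion_mul one_pos one_mem_strictPeriods_SL]
  simp [PowerSeries.coeff_mul, E_qExpansion_coeff_zero _ ⟨2, rfl⟩,
    E_qExpansion_coeff_zero _ ⟨4, rfl⟩, -PowerSeries.coeff_zero_eq_constantCoeff]

variable {R S : Type*} [CommRing R] [CommRing S]

variable (R) in
/-- The generating series `∑ σ_k(n) qⁿ` with coefficients in `R`. -/
noncomputable def sigmaSeries (k : ℕ) : R⟦X⟧ :=
  mk fun n ↦ (σ k n : R)

variable (R) in
/-- The generating series `∑ τ(n) qⁿ` with coefficients in `R`. -/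
noncomputable def tauSeries : R⟦X⟧ :=
  mk fun n ↦ (ramanujanTau n : R)

@[simp]
theorem coeff_sigmaSeries (k n : ℕ) : (sigmaSeries R k).coeff n = (σ k n : R) :=
  coeff_mk _ _

@[simp]
theorem coeff_tauSeries (n : ℕ) : (tauSeries R).coeff n = (ramanujanTau n : R) :=
  coeff_mk _ _

theorem map_sigmaSeries (φ : R →+* S) (k : ℕ) : (sigmaSeries R k).map φ = sigmaSeries S k := by
  ext n
  simp

theorem map_tauSeries (φ : R →+* S) : (tauSeries R).map φ = tauSeries S := by
  ext n
  simp

theorem qExpansion_discriminant : qExpansion 1 discriminant = tauSeries ℂ := by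
  ext n
  rw [qExpansion_discriminant_coeff, coeff_tauSeries]

theorem qExpansion_E {k : ℕ} (hk : 3 ≤ k) (hk2 : Even k) :
    qExpansion 1 (E hk) = 1 + C (-(2 * k / bernoulli k : ℂ)) * sigmaSeries ℂ (k - 1) := by
  ext n
  rw [E_qExpansion_coeff hk hk2, map_add, coeff_C_mul, coeff_sigmaSeries, coeff_one]
  split_ifs with hn
  · simp [hn]
  · rw [zero_add]

theorem qExpansion_E₄ : qExpansion 1 E₄ = 1 + 240 * sigmaSeries ℂ 3 := by
  rw [qExpansion_E _ ⟨2, rfl⟩, show bernoulli 4 = -1 / 30 by decide +kernel, ← map_ofNat C 240]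
  norm_num

theorem qExpansion_E₆ : qExpansion 1 E₆ = 1 - 504 * sigmaSeries ℂ 5 := by
  rw [qExpansion_E _ ⟨3, rfl⟩, show bernoulli 6 = 1 / 42 by decide +kernel, ← map_ofNat C 504,
    sub_eq_add_neg, ← neg_mul, ← map_neg]
  norm_num

theorem qExpansion_E₈ :
    qExpansion 1 (E (show 3 ≤ 8 by norm_num)) = 1 + 480 * sigmaSeries ℂ 7 := by
  rw [qExpansion_E _ ⟨4, rfl⟩, show bernoulli 8 = -1 / 30 by decide +kernel, ← map_ofNat C 480]
  norm_num

theorem bracket_sigmaSeries_eq_tauSeries_int :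
    7 * (1 + 240 * sigmaSeries ℤ 3) * theta ℤ (sigmaSeries ℤ 5) +
      5 * (1 - 504 * sigmaSeries ℤ 5) * theta ℤ (sigmaSeries ℤ 3) = 12 * tauSeries ℤ := by
  have hbracket := qExpansion_rankinCohenBracket E₄ E₆
  rw [rankinCohenBracket_E₄_E₆, qExpansion_smul_discriminant, qExpansion_discriminant,
    qExpansion_E₄, qExpansion_E₆, map_add, map_sub, Derivation.map_one_eq_zero, theta_ofNat_mul,
    theta_ofNat_mul] at hbracket
  simp only [smul_eq_C_mul, Int.cast_ofNat, map_neg, map_ofNat] at hbracket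
  apply map_injective (Int.castRingHom ℂ) Int.cast_injective
  simp only [map_add, map_sub, map_mul, map_one, map_ofNat, map_theta, map_sigmaSeries,
    map_tauSeries]
  have : CharZero ℂ⟦X⟧ := charZero_of_injective_ringHom C_injective
  have h288 : (-288 : ℂ⟦X⟧) ≠ 0 := by norm_num
  apply mul_left_cancel₀ h288
  linear_combination -hbracket

theorem sigmaSeries_seven_int : sigmaSeries ℤ 7 = sigmaSeries ℤ 3 + 120 * sigmaSeries ℤ 3 ^ 2 := by
  have hsq := qExpansion_E₈
  rw [E₈_eq_E₄_sq, coe_mcast, ModularForm.qExpansion_mul one_pos one_mem_strictPeriods_SL,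
    qExpansion_E₄] at hsq
  apply map_injective (Int.castRingHom ℂ) Int.cast_injective
  simp only [map_add, map_mul, map_pow, map_ofNat, map_sigmaSeries]
  have : CharZero ℂ⟦X⟧ := charZero_of_injective_ringHom C_injective
  have h480 : (480 : ℂ⟦X⟧) ≠ 0 := by norm_num
  apply mul_left_cancel₀ h480
  linear_combination -hsq

variable (R) in
theorem bracket_sigmaSeries_eq_tauSeries :
    7 * (1 + 240 * sigmaSeries R 3) * theta R (sigmaSeries R 5) +
      5 * (1 - 504 * sigmaSeries R 5) * theta R (sigmaSeries R 3) = 12 * tauSeries R := by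
  simpa only [map_add, map_sub, map_mul, map_one, map_ofNat, map_theta, map_sigmaSeries,
    map_tauSeries] using
    congrArg (PowerSeries.map (Int.castRingHom R)) bracket_sigmaSeries_eq_tauSeries_int

variable (R) in
theorem sigmaSeries_seven : sigmaSeries R 7 = sigmaSeries R 3 + 120 * sigmaSeries R 3 ^ 2 := by
  simpa only [map_add, map_mul, map_pow, map_ofNat, map_sigmaSeries] using
    congrArg (PowerSeries.map (Int.castRingHom R)) sigmaSeries_seven_int

end IntegralIdentities

section Congruences

open PowerSeries
open scoped ArithmeticFunction.sigma

theorem natCast_powerSeries_zmod_self (m : ℕ) : (m : (ZMod m)⟦X⟧) = 0 := by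
  rw [← map_natCast C, ZMod.natCast_self, map_zero]

theorem tauSeries_zmod_seven : tauSeries (ZMod 7) = theta (ZMod 7) (sigmaSeries (ZMod 7) 3) := by
  have h7 : (7 : (ZMod 7)⟦X⟧) = 0 := natCast_powerSeries_zmod_self 7
  set A := sigmaSeries (ZMod 7) 3
  set B := sigmaSeries (ZMod 7) 5
  linear_combination 4 * bracket_sigmaSeries_eq_tauSeries (ZMod 7) -
    (4 * (1 + 240 * A) * theta _ B - 1440 * B * theta _ A + 3 * theta _ A -
      7 * tauSeries (ZMod 7)) * h7

theorem sigmaSeries_zmod_five : sigmaSeries (ZMod 5) 5 = sigmaSeries (ZMod 5) 1 := by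
  ext n
  simp [ArithmeticFunction.sigma_apply, ZMod.pow_card]

theorem tauSeries_zmod_five : tauSeries (ZMod 5) = theta (ZMod 5) (sigmaSeries (ZMod 5) 1) := by
  have h5 : (5 : (ZMod 5)⟦X⟧) = 0 := natCast_powerSeries_zmod_self 5
  have hbracket := bracket_sigmaSeries_eq_tauSeries (ZMod 5)
  rw [sigmaSeries_zmod_five] at hbracket
  set A := sigmaSeries (ZMod 5) 3
  set B := sigmaSeries (ZMod 5) 1
  linear_combination 2 * hbracket - (2 * (7 * 48 * A * theta _ B) +
    2 * (1 - 504 * B) * theta _ A + 3 * theta _ B - 5 * tauSeries (ZMod 5)) * h5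

theorem three_mul_sigmaSeries_five_zmod_nine :
    3 * sigmaSeries (ZMod 9) 5 = 3 * sigmaSeries (ZMod 9) 3 := by
  have hpow : ∀ x : ZMod 9, 3 * x ^ 5 = 3 * x ^ 3 := by decide
  ext n
  simp [ArithmeticFunction.sigma_apply, Finset.mul_sum, hpow]

theorem three_mul_sigmaSeries_one_zmod_nine :
    3 * sigmaSeries (ZMod 9) 1 =
      7 * sigmaSeries (ZMod 9) 5 + 4 * sigmaSeries (ZMod 9) 3 + sigmaSeries (ZMod 9) 7 := by
  have hpow : ∀ x : ZMod 9, 3 * x = 7 * x ^ 5 + 4 * x ^ 3 + x ^ 7 := by decide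
  ext n
  simp only [map_add, coeff_ofNat_mul, coeff_sigmaSeries, ArithmeticFunction.sigma_apply, pow_one,
    Nat.cast_sum, Nat.cast_pow, Finset.mul_sum, ← Finset.sum_add_distrib]
  exact Finset.sum_congr rfl fun d _ ↦ hpow d

theorem three_mul_tauSeries_zmod_nine :
    3 * tauSeries (ZMod 9) = 3 * theta (ZMod 9) (sigmaSeries (ZMod 9) 1) := by
  have h9 : (9 : (ZMod 9)⟦X⟧) = 0 := natCast_powerSeries_zmod_self 9
  have hfive := congrArg (theta (ZMod 9)) three_mul_sigmaSeries_five_zmod_nine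
  have hone := congrArg (theta (ZMod 9)) three_mul_sigmaSeries_one_zmod_nine
  have hseven := congrArg (theta (ZMod 9)) (sigmaSeries_seven (ZMod 9))
  simp only [map_add, theta_ofNat_mul, Derivation.leibniz_pow] at hfive hone hseven
  simp only [smul_eq_mul, nsmul_eq_mul, Nat.cast_ofNat, Nat.add_one_sub_one, pow_one] at hseven
  set A := sigmaSeries (ZMod 9) 3
  set B := sigmaSeries (ZMod 9) 5
  linear_combination -bracket_sigmaSeries_eq_tauSeries (ZMod 9) - hone - hseven +
    560 * A * hfive +
    (160 * A * theta _ A - 280 * B * theta _ A - tauSeries (ZMod 9)) * h9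

theorem ramanujanTau_mod_seven (n : ℕ) : (ramanujanTau n : ZMod 7) = n * (σ 3 n : ZMod 7) := by
  simpa using congrArg (coeff n) tauSeries_zmod_seven

theorem ramanujanTau_mod_five (n : ℕ) : (ramanujanTau n : ZMod 5) = n * (σ 1 n : ZMod 5) := by
  simpa using congrArg (coeff n) tauSeries_zmod_five

theorem intCast_zmod_eq_of_mul_eq {m k : ℕ} (hk : k ≠ 0) {a b : ℤ}
    (h : (k * a : ZMod (k * m)) = k * b) : (a : ZMod m) = b := by
  have h' : ((k * a : ℤ) : ZMod (k * m)) = (k * b : ℤ) := mod_cast h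
  rw [ZMod.intCast_eq_intCast_iff] at h' ⊢
  push_cast at h'
  exact h'.mul_left_cancel' (by exact_mod_cast hk)

theorem ramanujanTau_mod_three (n : ℕ) : (ramanujanTau n : ZMod 3) = n * (σ 1 n : ZMod 3) := by
  have h : (3 * ramanujanTau n : ZMod 9) = 3 * (n * σ 1 n : ℤ) := by
    simpa using congrArg (coeff n) three_mul_tauSeries_zmod_nine
  exact_mod_cast intCast_zmod_eq_of_mul_eq (m := 3) (k := 3) three_ne_zero h

theorem toZMod_eisCoeff (p : ℕ) [Fact p.Prime] (ω : ℤ → ℤ_[p])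
    (hω : ∀ m : ℤ, PadicInt.toZMod (ω m) = (m : ZMod p)) (j n : ℕ) :
    PadicInt.toZMod (eisCoeff p ω 2 (j + 1) 0 n) = n * (σ j n : ZMod p) := by
  rw [eisCoeff, map_sum, ArithmeticFunction.sigma_apply, ← Nat.sum_div_divisors n fun d ↦ d ^ j,
    Nat.cast_sum, Finset.mul_sum]
  refine Finset.sum_congr rfl fun d hd ↦ ?_
  have hn : ((n / d : ℕ) : ZMod p) * d = n := by
    rw [← Nat.cast_mul, Nat.div_mul_cancel (Nat.dvd_of_mem_divisors hd)]
  simp only [map_mul, map_pow, hω, map_natCast, pow_zero, mul_one, Int.cast_natCast, Nat.cast_pow]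
  rw [← hn]
  ring

end Congruences

/-- Theorem A: for each `p ∈ {3, 5, 7}` there is a full congruence of Fourier coefficients
modulo `p` between `Δ` and the weight-two Eisenstein series `E_p`, where
`E_3 = E_{2, ω_3², 𝟙}`, `E_5 = E_{2, ω_5², 𝟙}` and `E_7 = E_{2, ω_7⁴, 𝟙}`.
Each `ωₚ` is the Teichmüller character mod `p`, characterized by `ωₚ(m) ≡ m (mod p)` together
with its values being Teichmüller representatives (`ωₚ(m)^p = ωₚ(m)`); the exponent `0` on the
second character gives the trivial character `𝟙`. -/
theorem tau_congruent_weight_two_eisenstein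
    (ω₃ : ℤ → ℤ_[3])
    (hω₃_cong : ∀ m : ℤ, PadicInt.toZMod (ω₃ m) = (m : ZMod 3))
    (hω₃_teich : ∀ m : ℤ, ω₃ m ^ 3 = ω₃ m)
    (ω₅ : ℤ → ℤ_[5])
    (hω₅_cong : ∀ m : ℤ, PadicInt.toZMod (ω₅ m) = (m : ZMod 5))
    (hω₅_teich : ∀ m : ℤ, ω₅ m ^ 5 = ω₅ m)
    (ω₇ : ℤ → ℤ_[7])
    (hω₇_cong : ∀ m : ℤ, PadicInt.toZMod (ω₇ m) = (m : ZMod 7))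
    (hω₇_teich : ∀ m : ℤ, ω₇ m ^ 7 = ω₇ m) :
    ∀ n : ℕ,
      ((ramanujanTau n : ℤ) : ZMod 3) = PadicInt.toZMod (eisCoeff 3 ω₃ 2 2 0 n) ∧
      ((ramanujanTau n : ℤ) : ZMod 5) = PadicInt.toZMod (eisCoeff 5 ω₅ 2 2 0 n) ∧
      ((ramanujanTau n : ℤ) : ZMod 7) = PadicInt.toZMod (eisCoeff 7 ω₇ 2 4 0 n) := by
  intro n
  refine ⟨?_, ?_, ?_⟩
  · rw [ramanujanTau_mod_three, toZMod_eisCoeff 3 ω₃ hω₃_cong 1]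
  · rw [ramanujanTau_mod_five, toZMod_eisCoeff 5 ω₅ hω₅_cong 1]
  · rw [ramanujanTau_mod_seven, toZMod_eisCoeff 7 ω₇ hω₇_cong 3]
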